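/- Let D be a simple object of the category of ťtale ŌÜ-modules over K = k((u)) (k = ő≤F_p). Then there exist integers őī > 0, n ‚Č• 0 and a nonzero z ‚ąą D with ŌÜ^őī(z) = u^n z. -/

import Mathlib

namespace Phi
open HahnSeries

variable {k : Type*} [Field k]

def Ord (m : ℤ) (f : LaurentSeries k) : Prop := ∀ j < m, f.coeff j = 0

lemma Ord.mono {m n : ℤ} {f : LaurentSeries k} (h : Ord m f) (hn : n ≤ m) : Ord n f :=
  fun j hj => h j (by omega)

lemma Ord.add {m : ℤ} {f g : LaurentSeries k} (hf : Ord m f) (hg : Ord m g) : Ord m (f + g) := by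
  intro j hj
  simp [hf j hj, hg j hj]

lemma Ord.sub {m : ℤ} {f g : LaurentSeries k} (hf : Ord m f) (hg : Ord m g) : Ord m (f - g) := by
  intro j hj
  simp [hf j hj, hg j hj]

lemma Ord.sum {ι : Type*} {s : Finset ι} {m : ℤ} {f : ι → LaurentSeries k}
    (hf : ∀ i ∈ s, Ord m (f i)) : Ord m (∑ i ∈ s, f i) := by
  intro j hj
  rw [HahnSeries.coeff_sum]
  exact Finset.sum_eq_zero fun i hi => hf i hi j hj

lemma Ord.mul {m n : ℤ} {f g : LaurentSeries k} (hf : Ord m f) (hg : Ord n g) :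
    Ord (m + n) (f * g) := by
  intro j hj
  rw [HahnSeries.coeff_mul]
  refine Finset.sum_eq_zero fun x hx => ?_
  have h3 := (Finset.mem_antidiagonal.1 hx).2.2
  by_cases h : x.1 < m
  · rw [hf _ h, zero_mul]
  · rw [hg x.2 (by omega), mul_zero]

lemma coeff_u_mul (n j : ℤ) (f : LaurentSeries k) :
    ((single n 1 : LaurentSeries k) * f).coeff j = f.coeff (j - n) := by
  have := HahnSeries.coeff_single_mul_add (r := (1:k)) (x := f) (a := j - n) (b := n)
  simpa using this

lemma ord_u_mul {m n : ℤ} {f : LaurentSeries k} :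
    Ord m ((single n 1 : LaurentSeries k) * f) ↔ Ord (m - n) f := by
  constructor
  · intro h j hj
    have := h (j + n) (by omega)
    rw [coeff_u_mul] at this
    simpa using this
  · intro h j hj
    rw [coeff_u_mul]
    exact h _ (by omega)

lemma exists_ord (f : LaurentSeries k) : ∃ m : ℕ, Ord (-(m:ℤ)) f := by
  refine ⟨f.order.natAbs, fun j hj => ?_⟩
  apply HahnSeries.coeff_eq_zero_of_lt_order
  omega

/-- Coefficients below `N` lie in `S`. -/
def InS (S : Subring k) (N : ℤ) (f : LaurentSeries k) : Prop := ∀ j < N, f.coeff j ∈ S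

lemma InS.mul {S : Subring k} {N : ℤ} {f g : LaurentSeries k} (hf : InS S N f) (hg : InS S N g)
    (hf0 : Ord 0 f) (hg0 : Ord 0 g) : InS S N (f * g) := by
  intro j hj
  rw [HahnSeries.coeff_mul]
  refine Subring.sum_mem _ fun x hx => ?_
  have h3 := (Finset.mem_antidiagonal.1 hx).2.2
  by_cases h : x.1 < 0
  · rw [hf0 _ h, zero_mul]; exact S.zero_mem
  by_cases h' : x.2 < 0
  · rw [hg0 _ h', mul_zero]; exact S.zero_mem
  exact S.mul_mem (hf _ (by omega)) (hg _ (by omega))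

lemma InS.sum {S : Subring k} {N : ℤ} {ι : Type*} {s : Finset ι} {f : ι → LaurentSeries k}
    (hf : ∀ i ∈ s, InS S N (f i)) : InS S N (∑ i ∈ s, f i) := by
  intro j hj
  rw [HahnSeries.coeff_sum]
  exact Subring.sum_mem _ fun i hi => hf i hi j hj

lemma u_mul_u (m n : ℤ) : (single m 1 : LaurentSeries k) * single n 1 = single (m + n) 1 := by
  simp

lemma u_zero : (single (0:ℤ) 1 : LaurentSeries k) = 1 := rfl

lemma u_ne (n : ℤ) : (single n 1 : LaurentSeries k) ≠ 0 := by simp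

section phi
lemma ord_phi {b : ℕ} (hb : 1 < b) {σ : k ≃+* k} {φ : LaurentSeries k →+* LaurentSeries k}
    (hφ1 : ∀ (f : LaurentSeries k) (m : ℤ), (φ f).coeff ((b : ℤ) * m) = σ (f.coeff m))
    (hφ2 : ∀ (f : LaurentSeries k) (m : ℤ), ¬ ((b : ℤ) ∣ m) → (φ f).coeff m = 0)
    {m : ℤ} {f : LaurentSeries k} (hf : Ord m f) : Ord (b * m) (φ f) := by
  intro j hj
  by_cases h : (b:ℤ) ∣ j
  · obtain ⟨i, rfl⟩ := h
    rw [hφ1, hf i (lt_of_mul_lt_mul_left hj (by omega)), map_zero]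
  · exact hφ2 _ _ h

lemma ord_of_phi {b : ℕ} (hb : 1 < b) {σ : k ≃+* k} {φ : LaurentSeries k →+* LaurentSeries k}
    (hφ1 : ∀ (f : LaurentSeries k) (m : ℤ), (φ f).coeff ((b : ℤ) * m) = σ (f.coeff m))
    (hφ2 : ∀ (f : LaurentSeries k) (m : ℤ), ¬ ((b : ℤ) ∣ m) → (φ f).coeff m = 0)
    {m : ℤ} {f : LaurentSeries k} (hf : Ord (b * m + 1) (φ f)) : Ord (m + 1) f := by
  intro j hj
  have := hf (b * j) (by nlinarith)
  rw [hφ1] at this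
  simpa using this

lemma inS_phi {b : ℕ} (hb : 1 < b) {σ : k ≃+* k} {φ : LaurentSeries k →+* LaurentSeries k}
    (hφ1 : ∀ (f : LaurentSeries k) (m : ℤ), (φ f).coeff ((b : ℤ) * m) = σ (f.coeff m))
    (hφ2 : ∀ (f : LaurentSeries k) (m : ℤ), ¬ ((b : ℤ) ∣ m) → (φ f).coeff m = 0)
    {S : Subring k} (hS : ∀ x ∈ S, σ x ∈ S) {m : ℤ} {f : LaurentSeries k}
    (hf : InS S m f) : InS S (b * m) (φ f) := by
  intro j hj
  by_cases h : (b:ℤ) ∣ j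
  · obtain ⟨i, rfl⟩ := h
    rw [hφ1]
    exact hS _ (hf i (lt_of_mul_lt_mul_left hj (by omega)))
  · rw [hφ2 _ _ h]; exact S.zero_mem

lemma phi_u {b : ℕ} (hb : 1 < b) {σ : k ≃+* k} {φ : LaurentSeries k →+* LaurentSeries k}
    (hφ1 : ∀ (f : LaurentSeries k) (m : ℤ), (φ f).coeff ((b : ℤ) * m) = σ (f.coeff m))
    (hφ2 : ∀ (f : LaurentSeries k) (m : ℤ), ¬ ((b : ℤ) ∣ m) → (φ f).coeff m = 0)
    (n : ℤ) : φ (single n 1) = single (b * n) 1 := by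
  ext j
  by_cases h : (b:ℤ) ∣ j
  · obtain ⟨i, rfl⟩ := h
    rw [hφ1]
    by_cases hi : i = n
    · subst hi; simp
    · rw [coeff_single_of_ne hi, coeff_single_of_ne, map_zero]
      intro h
      exact hi (mul_left_cancel₀ (by omega) h)
  · rw [hφ2 _ _ h, coeff_single_of_ne]
    rintro rfl
    exact h ⟨_, rfl⟩
end phi

section core
variable {d : ℕ}

/-- The lattice filtration. -/
def L (m : ℤ) (x : Fin d → LaurentSeries k) : Prop := ∀ i, Ord m (x i)

lemma L.mono {m n : ℤ} {x : Fin d → LaurentSeries k} (h : L m x) (hn : n ≤ m) : L n x :=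
  fun i => (h i).mono hn

lemma L.add {m : ℤ} {x y : Fin d → LaurentSeries k} (h : L m x) (h' : L m y) : L m (x + y) :=
  fun i => (h i).add (h' i)

lemma L.sub {m : ℤ} {x y : Fin d → LaurentSeries k} (h : L m x) (h' : L m y) : L m (x - y) :=
  fun i => (h i).sub (h' i)

lemma L_u {m n : ℤ} {x : Fin d → LaurentSeries k} :
    L m ((single n 1 : LaurentSeries k) • x) ↔ L (m - n) x :=
  forall_congr' fun _ => ord_u_mul

lemma eq_zero_of_L {x : Fin d → LaurentSeries k} (h : ∀ n : ℕ, L n x) : x = 0 := by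
  funext i
  ext j
  exact h (j.natAbs + 1) i j (by have := Int.le_natAbs (a := j); push_cast [-Int.natCast_natAbs]; omega)

lemma L.mulVec {m n : ℤ} {A : Matrix (Fin d) (Fin d) (LaurentSeries k)}
    (hA : ∀ i j, Ord m (A i j)) {x : Fin d → LaurentSeries k} (hx : L n x) :
    L (m + n) (A.mulVec x) := fun i => Ord.sum fun j _ => (hA i j).mul (hx j)

/-- completeness -/
lemma exists_lim {c : ℕ} (hc : 0 < c) (y : ℕ → Fin d → LaurentSeries k) (h0 : ∀ j, L 0 (y j))
    (h : ∀ j : ℕ, L (c + j) (y (j + 1) - y j)) : ∃ z, ∀ j : ℕ, L (c + j) (z - y j) := by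
  have hd : ∀ j r : ℕ, L (c + j) (y (j + r) - y j) := by
    intro j r
    induction r with
    | zero => intro i; simp [Ord]
    | succ r ih =>
      have := ((h (j + r)).mono (n := c + j) (by push_cast; omega)).add ih
      simpa [add_assoc] using this
  refine ⟨fun i => HahnSeries.ofPowerSeries ℤ k (PowerSeries.mk fun n => (y n i).coeff n), ?_⟩
  intro j i l hl
  rcases lt_or_ge l 0 with hneg | hpos
  · have e : (HahnSeries.ofPowerSeries ℤ k
        (PowerSeries.mk fun n => (y n i).coeff n)).coeff l = 0 := by
      rw [ofPowerSeries_apply, embDomain_of_notMem_range]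
      rintro ⟨a, rfl⟩
      simp at hneg
      omega
    simp only [Pi.sub_apply, HahnSeries.coeff_sub, e, h0 j i l hneg, sub_zero]
  · lift l to ℕ using hpos
    simp only [Pi.sub_apply, HahnSeries.coeff_sub, LaurentSeries.coeff_coe_powerSeries,
      PowerSeries.coeff_mk]
    rcases le_total l j with hlj | hlj
    · obtain ⟨r, rfl⟩ := Nat.exists_eq_add_of_le hlj
      have := hd l r i l (by omega)
      simp only [Pi.sub_apply, HahnSeries.coeff_sub] at this
      rw [← neg_sub, this, neg_zero]
    · obtain ⟨r, rfl⟩ := Nat.exists_eq_add_of_le hlj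
      have := hd j r i (j + r : ℕ) (by omega)
      simpa only [Pi.sub_apply, HahnSeries.coeff_sub] using this

lemma lifting {c : ℕ} (hc : 0 < c) (T : (Fin d → LaurentSeries k) → (Fin d → LaurentSeries k))
    (hT : ∀ x y, T (x - y) = T x - T y)
    (hL : ∀ m : ℤ, c ≤ m → ∀ x, L m x → L (m + 1) (T x))
    (y : Fin d → LaurentSeries k) (hy0 : L 0 y) (hy : L c (T y - y)) :
    ∃ z, L c (z - y) ∧ T z = z := by
  have h1 : ∀ j : ℕ, L (c + j) (T^[j+1] y - T^[j] y) := by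
    intro j
    induction j with
    | zero => simpa using hy
    | succ j ih =>
      have := hL _ (by omega) _ ih
      rw [hT, ← Function.iterate_succ_apply' T, ← Function.iterate_succ_apply' T] at this
      exact this.mono (by push_cast; omega)
  have h0 : ∀ j : ℕ, L 0 (T^[j] y) := by
    intro j
    induction j with
    | zero => exact hy0
    | succ j ih =>
      have := ((h1 j).mono (n := 0) (by omega)).add ih
      simpa using this
  obtain ⟨z, hz⟩ := exists_lim hc (fun j => T^[j] y) h0 h1
  refine ⟨z, by simpa using hz 0, ?_⟩
  rw [← sub_eq_zero]
  apply eq_zero_of_L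
  intro n
  have a := (hL _ (by omega) _ (hz n)).mono (n := n) (by omega)
  have b := (hz (n + 1)).mono (n := n) (by push_cast; omega)
  rw [hT] at a
  have e := a.sub b
  simp only [Function.iterate_succ_apply'] at e
  simpa using e

variable {φ : LaurentSeries k →+* LaurentSeries k}

/-- Semilinear map with matrix `A`. -/
noncomputable def Psi (φ : LaurentSeries k →+* LaurentSeries k) (A : Matrix (Fin d) (Fin d) (LaurentSeries k))
    (x : Fin d → LaurentSeries k) : Fin d → LaurentSeries k := A.mulVec (fun i => φ (x i))

lemma Psi_sub (A : Matrix (Fin d) (Fin d) (LaurentSeries k)) (x y : Fin d → LaurentSeries k) :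
    Psi φ A (x - y) = Psi φ A x - Psi φ A y := by
  unfold Psi
  rw [← Matrix.mulVec_sub]
  congr 1
  funext i
  simp

lemma Psi_smul (A : Matrix (Fin d) (Fin d) (LaurentSeries k)) (a : LaurentSeries k)
    (x : Fin d → LaurentSeries k) :
    Psi φ A (a • x) = φ a • Psi φ A x := by
  unfold Psi
  rw [← Matrix.mulVec_smul]
  congr 1
  funext i
  simp

lemma Psi_iter_sub (A : Matrix (Fin d) (Fin d) (LaurentSeries k)) (n : ℕ) :
    ∀ (x y : Fin d → LaurentSeries k),
    (Psi φ A)^[n] (x - y) = (Psi φ A)^[n] x - (Psi φ A)^[n] y := by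
  induction n with
  | zero => simp
  | succ n ih => intro x y; simp only [Function.iterate_succ_apply, Psi_sub, ih]

theorem core {b : ℕ} (hb : 1 < b) {σ : k ≃+* k}
    (hφ1 : ∀ (f : LaurentSeries k) (m : ℤ), (φ f).coeff ((b : ℤ) * m) = σ (f.coeff m))
    (hφ2 : ∀ (f : LaurentSeries k) (m : ℤ), ¬ ((b : ℤ) ∣ m) → (φ f).coeff m = 0)
    (hd : 0 < d) (A B : Matrix (Fin d) (Fin d) (LaurentSeries k)) (h : ℕ)
    (hA : ∀ i j, Ord 0 (A i j)) (hB : ∀ i j, Ord 0 (B i j))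
    (hBA : B * A = (single (h:ℤ) 1 : LaurentSeries k) • (1 : Matrix (Fin d) (Fin d) _))
    (S : Subring k) (hfin : Finite S) (hS : ∀ x ∈ S, σ x ∈ S)
    (hAS : ∀ i j, InS S (2 * h + 1) (A i j)) :
    ∃ (δ n : ℕ), 0 < δ ∧ ∃ z : Fin d → LaurentSeries k, z ≠ 0 ∧
      (Psi φ A)^[δ] z = (single (n:ℤ) 1 : LaurentSeries k) • z := by
  have hup : ∀ (m : ℤ) x, L m x → L (b * m) (Psi φ A x) := by
    intro m x hx
    have := L.mulVec hA (fun i => ord_phi hb hφ1 hφ2 (hx i))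
    rw [zero_add] at this
    exact this
  have hupi : ∀ (n : ℕ) (m : ℤ) x, L m x → L (b ^ n * m) ((Psi φ A)^[n] x) := by
    intro n
    induction n with
    | zero => intro m x hx; simpa using hx
    | succ n ih =>
      intro m x hx
      rw [Function.iterate_succ_apply', pow_succ', mul_assoc]
      exact hup _ _ (ih m x hx)
  have hlow : ∀ x, L (h + 1) (Psi φ A x) → L 1 x := by
    intro x hx i
    have h1 := L.mulVec hB hx
    rw [Psi, Matrix.mulVec_mulVec, hBA, Matrix.smul_mulVec, Matrix.one_mulVec, L_u] at h1
    have := ord_of_phi hb hφ1 hφ2 (m := 0) (f := x i) (by simpa using h1 i)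
    simpa using this
  let P : (Fin d → LaurentSeries k) → Prop := fun x =>
    L 0 x ∧ ¬ L 1 x ∧ ∀ i, InS S (h + 1) (x i)
  have hstep : ∀ x : {x // P x}, ∃ (y : {x // P x}) (v : ℕ), v ≤ h ∧
      Psi φ A x = (single (v:ℤ) 1 : LaurentSeries k) • y.1 := by
    rintro ⟨x, hx0, hx1, hxS⟩
    have hex : ∃ v : ℕ, ¬ L (v + 1) (Psi φ A x) := ⟨h, fun hh => hx1 (hlow x hh)⟩
    classical
    let v := Nat.find hex
    have hv1 : ¬ L (v + 1) (Psi φ A x) := Nat.find_spec hex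
    have hvh : v ≤ h := Nat.find_min' hex (fun hh => hx1 (hlow x hh))
    have hv0 : L v (Psi φ A x) := by
      rcases Nat.eq_zero_or_pos v with h0 | h0
      · rw [h0]; simpa using hup 0 x hx0
      · have := Nat.find_min hex (m := v - 1) (by omega)
        rw [not_not] at this
        exact this.mono (by omega)
    refine ⟨⟨(single (-(v:ℤ)) 1 : LaurentSeries k) • Psi φ A x, ?_, ?_, ?_⟩, v, hvh, ?_⟩
    · rw [L_u]; simpa using hv0
    · rw [L_u]; simpa [add_comm] using hv1
    · intro i j hj
      rw [Pi.smul_apply, smul_eq_mul, coeff_u_mul]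
      refine InS.sum (S := S) (N := 2 * h + 1) (fun l _ => ?_) _ (by omega)
      refine InS.mul (hAS i l) ?_ (hA i l) (by simpa using ord_phi hb hφ1 hφ2 (hx0 l))
      intro r hr
      refine inS_phi hb hφ1 hφ2 hS (hxS l) r ?_
      nlinarith
    · rw [smul_smul, u_mul_u]
      simp
  choose nx v hv hnx using hstep
  have hP0 : P (Pi.single ⟨0, hd⟩ 1) := by
    refine ⟨?_, ?_, ?_⟩
    · intro i j hj
      by_cases hi : i = ⟨0, hd⟩
      · subst hi; rw [Pi.single_eq_same, ← u_zero, coeff_single_of_ne (by omega)]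
      · rw [Pi.single_eq_of_ne hi]; rfl
    · intro hh
      have := hh ⟨0, hd⟩ 0 (by omega)
      rw [Pi.single_eq_same, ← u_zero, coeff_single_same] at this
      exact one_ne_zero this
    · intro i j hj
      by_cases hi : i = ⟨0, hd⟩
      · subst hi
        rw [Pi.single_eq_same]
        by_cases h0 : j = 0
        · subst h0; rw [← u_zero, coeff_single_same]; exact S.one_mem
        · rw [← u_zero, coeff_single_of_ne h0]; exact S.zero_mem
      · rw [Pi.single_eq_of_ne hi]; exact S.zero_mem
  have hiter : ∀ (δ : ℕ) (x : {x // P x}), ∃ n : ℕ, n + h ≤ h * b ^ δ ∧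
      (Psi φ A)^[δ] x.1 = (single (n:ℤ) 1 : LaurentSeries k) • (nx^[δ] x).1 := by
    intro δ
    induction δ with
    | zero => intro x; exact ⟨0, by simp, by simp [u_zero]⟩
    | succ δ ih =>
      intro x
      obtain ⟨n, hn, e⟩ := ih x
      refine ⟨b * n + v (nx^[δ] x), ?_, ?_⟩
      · have h2 := hv (nx^[δ] x)
        have h3 := Nat.mul_le_mul_left b hn
        rw [pow_succ]
        nlinarith
      · rw [Function.iterate_succ_apply', Function.iterate_succ_apply', e, Psi_smul,
          phi_u hb hφ1 hφ2, hnx, smul_smul, u_mul_u]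
        push_cast; rfl
  let code : ℕ → (Fin d → Fin (h + 1) → S) := fun n i j =>
    ⟨((nx^[n] ⟨_, hP0⟩).1 i).coeff (j : ℕ), (nx^[n] ⟨_, hP0⟩).2.2.2 i _ (by omega)⟩
  obtain ⟨i, j, hij, hc⟩ : ∃ i j, i < j ∧ code i = code j := by
    obtain ⟨i, j, hij, hc⟩ := Finite.exists_ne_map_eq_of_infinite code
    rcases lt_or_gt_of_ne hij with hl | hl
    · exact ⟨i, j, hl, hc⟩
    · exact ⟨j, i, hl, hc.symm⟩
  obtain ⟨δ, rfl⟩ := Nat.exists_eq_add_of_lt hij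
  set y := nx^[i] ⟨_, hP0⟩ with hy
  have hy' : nx^[i + δ + 1] ⟨_, hP0⟩ = nx^[δ + 1] y := by
    rw [hy, ← Function.iterate_add_apply]; congr 1; rw [add_comm (δ + 1) i, add_assoc]
  obtain ⟨n, hn, e⟩ := hiter (δ + 1) y
  have hclose : L ((h + 1 : ℕ) : ℤ) ((nx^[δ + 1] y).1 - y.1) := by
    intro a r hr
    rcases lt_or_ge r 0 with hneg | hpos
    · rw [Pi.sub_apply, HahnSeries.coeff_sub, y.2.1 a r hneg, (nx^[δ + 1] y).2.1 a r hneg, sub_zero]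
    · lift r to ℕ using hpos
      have := congrArg Subtype.val (congrFun (congrFun hc a) ⟨r, by omega⟩)
      simp only [code, hy', ← hy] at this
      rw [Pi.sub_apply, HahnSeries.coeff_sub, this, sub_self]
  obtain ⟨z, hz, hTz⟩ := lifting (c := h + 1) (by omega)
    (fun x => (single (-(n:ℤ)) 1 : LaurentSeries k) • (Psi φ A)^[δ + 1] x)
    (fun x y => by simp only [Psi_iter_sub, smul_sub])
    (by
      intro m hm x hx
      rw [L_u]
      refine (hupi (δ + 1) m x hx).mono ?_
      have hn' : (n:ℤ) + h ≤ h * b ^ (δ + 1) := by exact_mod_cast hn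
      have hb2 : (2:ℤ) ≤ b ^ (δ + 1) := by
        have : b ^ 1 ≤ b ^ (δ + 1) := Nat.pow_le_pow_right (by omega) (by omega)
        rw [pow_one] at this
        have : 2 ≤ b ^ (δ + 1) := by omega
        exact_mod_cast this
      push_cast at hm
      nlinarith)
    y.1 y.2.1
    (by
      show L _ ((single (-(n:ℤ)) 1 : LaurentSeries k) • (Psi φ A)^[δ + 1] y.1 - y.1)
      rw [e, smul_smul, u_mul_u]
      simpa [u_zero] using hclose)
  refine ⟨δ + 1, n, by omega, z, ?_, ?_⟩
  · rintro rfl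
    apply y.2.2.1
    intro a r hr
    have := hz a r (by push_cast; omega)
    simpa using this
  · conv_rhs => rw [← hTz]
    rw [smul_smul, u_mul_u]
    simp
end core

lemma exists_pow (p : ℕ) [Fact p.Prime] (x : AlgebraicClosure (ZMod p)) :
    ∃ n, 0 < n ∧ x ^ p ^ n = x := by
  have hx : IsIntegral (ZMod p) x := (AlgebraicClosure.isAlgebraic (ZMod p)).isAlgebraic x |>.isIntegral
  let E := IntermediateField.adjoin (ZMod p) {x}
  have : FiniteDimensional (ZMod p) E := IntermediateField.adjoin.finiteDimensional hx
  have : Finite E := Module.finite_of_finite (ZMod p)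
  have : Fintype E := Fintype.ofFinite E
  have h1 := FiniteField.pow_card (⟨x, IntermediateField.mem_adjoin_simple_self _ x⟩ : E)
  have h2 : Fintype.card E = p ^ Module.finrank (ZMod p) E := by
    rw [Module.card_eq_pow_finrank (K := ZMod p), ZMod.card]
  refine ⟨_, Module.finrank_pos (R := ZMod p) (M := E), ?_⟩
  rw [← h2]
  exact congrArg Subtype.val h1

lemma pow_iter (p : ℕ) {k : Type*} [Monoid k] (x : k) (n m : ℕ) (h : x ^ p ^ n = x) :
    x ^ p ^ (n * m) = x := by
  induction m with
  | zero => simp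
  | succ m ih => rw [Nat.mul_succ, _root_.pow_add, pow_mul, ih, h]

lemma exists_subring (p : ℕ) [Fact p.Prime]
    (σ : AlgebraicClosure (ZMod p) ≃+* AlgebraicClosure (ZMod p))
    (F : Finset (AlgebraicClosure (ZMod p))) :
    ∃ S : Subring (AlgebraicClosure (ZMod p)), Finite S ∧ (∀ x ∈ S, σ x ∈ S) ∧ ∀ x ∈ F, x ∈ S := by
  choose f hf0 hf using exists_pow p
  let N := ∏ x ∈ F, f x
  have hN : 0 < N := Finset.prod_pos fun x _ => hf0 x
  refine ⟨(iterateFrobenius (AlgebraicClosure (ZMod p)) p N).eqLocus (RingHom.id _), ?_, ?_, ?_⟩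
  · have hq : 1 < p ^ N := Nat.one_lt_pow (by omega) (Fact.out : p.Prime).one_lt
    have hne := FiniteField.X_pow_card_sub_X_ne_zero (AlgebraicClosure (ZMod p)) hq
    refine Set.Finite.subset (Polynomial.rootSet_finite
      (Polynomial.X ^ (p ^ N) - Polynomial.X : Polynomial (AlgebraicClosure (ZMod p)))
      (AlgebraicClosure (ZMod p))) ?_
    intro x hx
    rw [Polynomial.mem_rootSet]
    refine ⟨hne, ?_⟩
    have : x ^ p ^ N = x := hx
    simp [this]
  · intro x hx
    have : x ^ p ^ N = x := hx
    show (σ x) ^ p ^ N = σ x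
    rw [← map_pow, this]
  · intro x hx
    show x ^ p ^ N = x
    obtain ⟨m, hm⟩ := Finset.dvd_prod_of_mem f hx
    show x ^ p ^ (∏ x ∈ F, f x) = x
    rw [hm]
    exact pow_iter p x _ _ (hf x)

lemma exists_ord_matrix {k : Type*} [Field k] {d : ℕ}
    (A : Matrix (Fin d) (Fin d) (LaurentSeries k)) :
    ∃ m : ℕ, ∀ i j, Ord (-(m:ℤ)) (A i j) := by
  choose f hf using fun (x : Fin d × Fin d) => exists_ord (A x.1 x.2)
  refine ⟨∑ x, f x, fun i j => (hf (i, j)).mono ?_⟩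
  have := Finset.single_le_sum (f := f) (fun _ _ => Nat.zero_le _) (Finset.mem_univ (i, j))
  omega

end Phi


/-- Eigenvector theorem: every simple étale φ-module `D` over `K = k((u))`,
`k = F̄_p`, contains a nonzero `z` with `φ^δ(z) = uⁿ z` for some `δ > 0`, `n ≥ 0`. -/
theorem stmt14 (p : ℕ) [Fact p.Prime] (b : ℕ) (hb : 1 < b)
    (σ : AlgebraicClosure (ZMod p) ≃+* AlgebraicClosure (ZMod p))
    (φ : LaurentSeries (AlgebraicClosure (ZMod p)) →+*
      LaurentSeries (AlgebraicClosure (ZMod p)))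
    (hφ1 : ∀ (f : LaurentSeries (AlgebraicClosure (ZMod p))) (m : ℤ),
      (φ f).coeff ((b : ℤ) * m) = σ (f.coeff m))
    (hφ2 : ∀ (f : LaurentSeries (AlgebraicClosure (ZMod p))) (m : ℤ),
      ¬ ((b : ℤ) ∣ m) → (φ f).coeff m = 0)
    (V : Type*) [AddCommGroup V]
    [Module (LaurentSeries (AlgebraicClosure (ZMod p))) V]
    [FiniteDimensional (LaurentSeries (AlgebraicClosure (ZMod p))) V]
    [Nontrivial V]
    (φV : V → V)
    (hadd : ∀ x y, φV (x + y) = φV x + φV y)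
    (hsemi : ∀ (c : LaurentSeries (AlgebraicClosure (ZMod p))) (x : V),
      φV (c • x) = φ c • φV x)
    (hetale : Submodule.span (LaurentSeries (AlgebraicClosure (ZMod p)))
      (Set.range φV) = ⊤)
    (hsimple : ∀ W : Submodule (LaurentSeries (AlgebraicClosure (ZMod p))) V,
      (∀ x ∈ W, φV x ∈ W) → W = ⊥ ∨ W = ⊤) :
    ∃ (δ n : ℕ), 0 < δ ∧ ∃ z : V, z ≠ 0 ∧
      φV^[δ] z = (HahnSeries.single (n : ℤ) 1 :
        LaurentSeries (AlgebraicClosure (ZMod p))) • z := by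
  classical
  set d := Module.finrank (LaurentSeries (AlgebraicClosure (ZMod p))) V with hd
  have hd0 : 0 < d := Module.finrank_pos
  let e := Module.finBasis (LaurentSeries (AlgebraicClosure (ZMod p))) V
  -- `φV` in coordinates
  have hzero : φV 0 = 0 := by simpa using hsemi 0 0
  let Φ : V →+ V := ⟨⟨φV, hzero⟩, hadd⟩
  have hsum : ∀ x : Fin d → LaurentSeries (AlgebraicClosure (ZMod p)),
      φV (∑ i, x i • e i) = ∑ i, φ (x i) • φV (e i) := by
    intro x
    have := map_sum Φ (fun i => x i • e i) Finset.univ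
    refine this.trans (Finset.sum_congr rfl fun i _ => hsemi _ _)
  have hspan : ⊤ ≤ Submodule.span (LaurentSeries (AlgebraicClosure (ZMod p)))
      (Set.range fun i => φV (e i)) := by
    rw [← hetale, Submodule.span_le]
    rintro _ ⟨x, rfl⟩
    rw [← e.sum_repr x, hsum]
    exact Submodule.sum_mem _ fun i _ => Submodule.smul_mem _ _ (Submodule.subset_span ⟨i, rfl⟩)
  let e' := basisOfTopLeSpanOfCardEqFinrank (fun i => φV (e i)) hspan (by simp [hd])
  have he' : ∀ i, e' i = φV (e i) := fun i => by simp [e']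
  let A0 := e.toMatrix e'
  let B0 := e'.toMatrix e
  have hBA0 : B0 * A0 = 1 := Module.Basis.toMatrix_mul_toMatrix_flip e' e
  obtain ⟨m, hm⟩ := Phi.exists_ord_matrix A0
  let U : ℤ → LaurentSeries (AlgebraicClosure (ZMod p)) := fun n => HahnSeries.single n 1
  let A := U ((b - 1) * m) • A0
  have hA : ∀ i j, Phi.Ord 0 (A i j) := by
    intro i j
    refine Phi.ord_u_mul.2 ((hm i j).mono ?_)
    have : (2:ℤ) ≤ b := by exact_mod_cast hb
    nlinarith
  let B1 := U (-((b - 1) * m)) • B0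
  have hBA1 : B1 * A = 1 := by
    simp only [B1, A, U]
    rw [Matrix.smul_mul, Matrix.mul_smul, hBA0, smul_smul, Phi.u_mul_u, neg_add_cancel,
      Phi.u_zero, one_smul]
  obtain ⟨h, hh⟩ := Phi.exists_ord_matrix B1
  obtain ⟨S, hSf, hSσ, hS⟩ := Phi.exists_subring p σ
    ((Finset.univ : Finset ((Fin d × Fin d) × Fin (2 * h + 1))).image
      fun x => (A x.1.1 x.1.2).coeff (x.2 : ℕ))
  obtain ⟨δ, n, hδ, z, hz, hzz⟩ := Phi.core hb hφ1 hφ2 hd0 A (U h • B1) h hA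
    (fun i j => Phi.ord_u_mul.2 (by simpa using hh i j))
    (by rw [Matrix.smul_mul, hBA1]) S hSf hSσ (by
      intro i j r hr
      rcases lt_or_ge r 0 with hneg | hpos
      · rw [hA i j r hneg]; exact S.zero_mem
      · lift r to ℕ using hpos
        exact hS _ (Finset.mem_image.2 ⟨((i, j), ⟨r, by omega⟩), Finset.mem_univ _, rfl⟩))
  let f : (Fin d → LaurentSeries (AlgebraicClosure (ZMod p))) → V :=
    fun x => U m • ∑ i, x i • e i
  have hsc : Function.Semiconj f (Phi.Psi φ A) φV := by
    intro x
    have h1 : ∀ j, φV (e j) = ∑ i, A0 i j • e i := by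
      intro j
      rw [← he']
      exact (e.sum_repr (e' j)).symm
    simp only [f]
    rw [hsemi, hsum]
    simp only [U, Phi.phi_u hb hφ1 hφ2, h1, Phi.Psi, Matrix.mulVec, dotProduct, Finset.sum_smul,
      Finset.smul_sum, smul_smul]
    rw [Finset.sum_comm]
    refine Finset.sum_congr rfl fun j _ => Finset.sum_congr rfl fun i _ => ?_
    congr 1
    have h2 : (HahnSeries.single ((b:ℤ) * m) 1 : LaurentSeries (AlgebraicClosure (ZMod p))) =
        HahnSeries.single (m:ℤ) 1 * HahnSeries.single (((b:ℤ) - 1) * m) 1 := by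
      rw [Phi.u_mul_u]; congr 1; ring
    rw [h2]
    simp only [A, U, Matrix.smul_apply, smul_eq_mul]
    ring
  refine ⟨δ, n, hδ, f z, ?_, ?_⟩
  · intro h0
    apply hz
    have h1 := (smul_eq_zero.1 h0).resolve_left (Phi.u_ne _)
    funext i
    exact Fintype.linearIndependent_iff.1 e.linearIndependent z h1 i
  · rw [← (hsc.iterate_right δ).eq z, hzz]
    simp only [f, Pi.smul_apply, Finset.smul_sum, smul_smul, smul_eq_mul]
    refine Finset.sum_congr rfl fun i _ => ?_
    congr 1
    ring
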